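/- Let W ⊆ (0,1)×(0,1) be a Borel set of class A_{δσ}. Then α(W) = β(W), where α(W) = sup{m(W) : m ∈ M}, M the set of positive Borel measures on the square with both marginals bounded by Lebesgue measure, and β(W) = inf{Leb(U)+Leb(V) : W ⊆ (U×(0,1)) ∪ ((0,1)×V)}. -/

import Mathlib

open MeasureTheory Set
open scoped ENNReal

noncomputable section

/-- The set of positive Borel measures on the plane whose marginals are
bounded by Lebesgue measure restricted to `(0,1)`. -/
def Mset : Set (Measure (ℝ × ℝ)) :=
  {m | m.map Prod.fst ≤ volume.restrict (Ioo (0:ℝ) 1) ∧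
       m.map Prod.snd ≤ volume.restrict (Ioo (0:ℝ) 1)}

/-- `α(W) = sup { m(W) : m ∈ M }`. -/
def alpha (W : Set (ℝ × ℝ)) : ℝ≥0∞ := ⨆ m ∈ Mset, m W

/-- `β(W)`: the infimum of `Leb(U)+Leb(V)` over Borel `U, V ⊆ (0,1)`
whose cross `(U×(0,1)) ∪ ((0,1)×V)` covers `W`. -/
def beta (W : Set (ℝ × ℝ)) : ℝ≥0∞ :=
  ⨅ (U : Set ℝ) (V : Set ℝ) (_ : MeasurableSet U) (_ : MeasurableSet V)
    (_ : U ⊆ Ioo (0:ℝ) 1) (_ : V ⊆ Ioo (0:ℝ) 1)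
    (_ : W ⊆ U ×ˢ Ioo (0:ℝ) 1 ∪ Ioo (0:ℝ) 1 ×ˢ V),
    volume U + volume V

/-- A finite union of measurable rectangles `U ×ˢ V`, `U, V` Borel in `(0,1)`. -/
def IsFinUnionRect (S : Set (ℝ × ℝ)) : Prop :=
  ∃ (n : ℕ) (R : Fin n → Set (ℝ × ℝ)),
    (∀ k, ∃ U V : Set ℝ, MeasurableSet U ∧ MeasurableSet V ∧
      U ⊆ Ioo (0:ℝ) 1 ∧ V ⊆ Ioo (0:ℝ) 1 ∧ R k = U ×ˢ V) ∧
    S = ⋃ k, R k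

/-- The class `A_{δσ}`: countable unions of countable intersections of
finite unions of measurable rectangles. -/
def MemADeltaSigma (W : Set (ℝ × ℝ)) : Prop :=
  ∃ G : ℕ → ℕ → Set (ℝ × ℝ),
    (∀ i j, IsFinUnionRect (G i j)) ∧ W = ⋃ i, ⋂ j, G i j

/-!
For compact `K` the duality is Hahn–Banach and Riesz: a linear functional dominated by the dual
cost and equal to it at the indicator of `K` is positive, hence given on compactly supported
functions by a measure, whose marginals are admissible; a fractional cover is turned into a genuine
one of no larger cost by cutting the weights at a suitable level. Measurable rectangles are compact
up to sets of small cover cost, and this property passes to finite unions and to countable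
intersections because the cover cost is countably subadditive. For an increasing union, the
square integrable fractional covers of bounded mass form decreasing closed convex sets in a Hilbert
space; their points of minimal norm converge to a fractional cover of the union.
-/

open Filter Topology CompactlySupported
open scoped NNReal

theorem nonempty_iInter_of_antitone_isClosed_convex {H : Type*} [NormedAddCommGroup H]
    [InnerProductSpace ℝ H] [CompleteSpace H] {C : ℕ → Set H} (hanti : Antitone C)
    (hclosed : ∀ n, IsClosed (C n)) (hconvex : ∀ n, Convex ℝ (C n)) {R : ℝ}
    (hbdd : ∀ n, ∃ x ∈ C n, ‖x‖ ≤ R) : (⋂ n, C n).Nonempty := by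
  have hproj (n : ℕ) : ∃ x ∈ C n, ∀ y ∈ C n, 0 ≤ inner ℝ x (y - x) := by
    obtain ⟨y, hy, -⟩ := hbdd n
    obtain ⟨x, hx, hmin⟩ := exists_norm_eq_iInf_of_complete_convex ⟨y, hy⟩
      (hclosed n).isComplete (hconvex n) 0
    refine ⟨x, hx, fun y hy ↦ ?_⟩
    have := (norm_eq_iInf_iff_real_inner_le_zero (hconvex n) hx).1 hmin y hy
    simpa only [zero_sub, inner_neg_left, neg_nonpos] using this
  choose x hxC hx using hproj
  have hdist {n m : ℕ} (hnm : n ≤ m) : ‖x m - x n‖ ^ 2 ≤ ‖x m‖ ^ 2 - ‖x n‖ ^ 2 := by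
    have hinner := hx n (x m) (hanti hnm (hxC m))
    have hexpand := norm_add_sq_real (x n) (x m - x n)
    rw [add_sub_cancel] at hexpand
    linarith
  have hle (n : ℕ) : ‖x n‖ ^ 2 ≤ R ^ 2 := by
    obtain ⟨y, hy, hyR⟩ := hbdd n
    have hinner := hx n y hy
    have hcs := real_inner_le_norm (x n) y
    rw [inner_sub_right, real_inner_self_eq_norm_sq] at hinner
    have : ‖x n‖ ≤ ‖y‖ := by nlinarith [norm_nonneg (x n), norm_nonneg y]
    gcongr
    exact this.trans hyR
  have hbddAbove : BddAbove (range fun n ↦ ‖x n‖ ^ 2) := ⟨R ^ 2, forall_mem_range.2 hle⟩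
  have hcauchy : CauchySeq x := by
    refine Metric.cauchySeq_iff'.2 fun ε hε ↦ ?_
    obtain ⟨N, hN⟩ := exists_lt_of_lt_ciSup (sub_lt_self (⨆ n, ‖x n‖ ^ 2) (pow_pos hε 2))
    refine ⟨N, fun n hn ↦ ?_⟩
    rw [dist_eq_norm]
    refine lt_of_pow_lt_pow_left₀ 2 hε.le ?_
    linarith [hdist hn, le_ciSup hbddAbove n]
  obtain ⟨z, hz⟩ := cauchySeq_tendsto_of_complete hcauchy
  refine ⟨z, mem_iInter.2 fun n ↦ (hclosed n).mem_of_tendsto hz ?_⟩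
  filter_upwards [eventually_ge_atTop n] with m hm using hanti hm (hxC m)

section FractionalCovers

variable {X Y : Type*} [MeasurableSpace X] [MeasurableSpace Y] {μ : Measure X} {ν : Measure Y}

/-- A fractional cover of `W`: nonnegative weights `u`, `v` whose sum is at least `1` on `W`,
relaxing the covers of `W` by the columns over `U` and the rows over `V`. Exceptions are allowed on
null sets of columns and rows, which is what the filter `ae μ ×ˢ ae ν` expresses; the larger
exceptional sets of `ae (μ.prod ν)` (e.g. the diagonal) need not be negligible. -/
structure IsFracCover (μ : Measure X) (ν : Measure Y) (W : Set (X × Y)) (u : X → ℝ) (v : Y → ℝ) :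
    Prop where
  nonneg_left : 0 ≤ᵐ[μ] u
  nonneg_right : 0 ≤ᵐ[ν] v
  one_le_add : ∀ᶠ p in ae μ ×ˢ ae ν, p ∈ W → 1 ≤ u p.1 + v p.2

/-- The Hilbert space of pairs of square integrable weights, where fractional covers have minimal
points. -/
abbrev WeightSpace (μ : Measure X) (ν : Measure Y) : Type _ := WithLp 2 (Lp ℝ 2 μ × Lp ℝ 2 ν)

/-- The square integrable fractional covers of `W` of total mass at most `c`. -/
def fracCoverSet (μ : Measure X) (ν : Measure Y) (W : Set (X × Y)) (c : ℝ) :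
    Set (WeightSpace μ ν) :=
  {z | IsFracCover μ ν W z.fst z.snd ∧ ∫ x, z.fst x ∂μ + ∫ y, z.snd y ∂ν ≤ c}

theorem coeFn_smul_add_smul (a b : ℝ) (f g : Lp ℝ 2 μ) :
    ⇑(a • f + b • g) =ᵐ[μ] fun x ↦ a * f x + b * g x := by
  filter_upwards [Lp.coeFn_add (a • f) (b • g), Lp.coeFn_smul a f, Lp.coeFn_smul b g]
    with x hadd hf hg
  simp only [hadd, hf, hg, Pi.add_apply, Pi.smul_apply, smul_eq_mul]

theorem integral_smul_add_smul [IsFiniteMeasure μ] (a b : ℝ) (f g : Lp ℝ 2 μ) :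
    ∫ x, (a • f + b • g) x ∂μ = a * ∫ x, f x ∂μ + b * ∫ x, g x ∂μ := by
  rw [integral_congr_ae (coeFn_smul_add_smul a b f g), integral_add, integral_const_mul,
    integral_const_mul]
  exacts [((Lp.memLp f).integrable one_le_two).const_mul a,
    ((Lp.memLp g).integrable one_le_two).const_mul b]

theorem convex_fracCoverSet [IsFiniteMeasure μ] [IsFiniteMeasure ν] (W : Set (X × Y)) (c : ℝ) :
    Convex ℝ (fracCoverSet μ ν W c) := by
  rintro z ⟨hz, hzc⟩ w ⟨hw, hwc⟩ a b ha hb hab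
  have hfst := coeFn_smul_add_smul a b z.fst w.fst
  have hsnd := coeFn_smul_add_smul a b z.snd w.snd
  refine ⟨⟨?_, ?_, ?_⟩, ?_⟩
  · filter_upwards [hfst, hz.nonneg_left, hw.nonneg_left] with x hx hzx hwx
    simp only [WithLp.add_fst, WithLp.smul_fst, hx]
    exact add_nonneg (mul_nonneg ha hzx) (mul_nonneg hb hwx)
  · filter_upwards [hsnd, hz.nonneg_right, hw.nonneg_right] with y hy hzy hwy
    simp only [WithLp.add_snd, WithLp.smul_snd, hy]
    exact add_nonneg (mul_nonneg ha hzy) (mul_nonneg hb hwy)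
  · filter_upwards [hz.one_le_add, hw.one_le_add, tendsto_fst.eventually hfst,
      tendsto_snd.eventually hsnd] with p hzp hwp hx hy hpW
    simp only [WithLp.add_fst, WithLp.smul_fst, WithLp.add_snd, WithLp.smul_snd, hx, hy]
    nlinarith [hzp hpW, hwp hpW]
  · simp only [WithLp.add_fst, WithLp.smul_fst, WithLp.add_snd, WithLp.smul_snd,
      integral_smul_add_smul]
    calc a * ∫ x, z.fst x ∂μ + b * ∫ x, w.fst x ∂μ + (a * ∫ y, z.snd y ∂ν + b * ∫ y, w.snd y ∂ν)
        = a * (∫ x, z.fst x ∂μ + ∫ y, z.snd y ∂ν) + b * (∫ x, w.fst x ∂μ + ∫ y, w.snd y ∂ν) := by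
          ring
      _ ≤ a * c + b * c := by gcongr
      _ = c := by rw [← add_mul, hab, one_mul]

theorem IsFracCover.of_tendsto {W : Set (X × Y)} {u : ℕ → X → ℝ} {v : ℕ → Y → ℝ} {u' : X → ℝ}
    {v' : Y → ℝ} (h : ∀ n, IsFracCover μ ν W (u n) (v n))
    (hu : ∀ᵐ x ∂μ, Tendsto (u · x) atTop (𝓝 (u' x)))
    (hv : ∀ᵐ y ∂ν, Tendsto (v · y) atTop (𝓝 (v' y))) : IsFracCover μ ν W u' v' where
  nonneg_left := by
    filter_upwards [hu, ae_all_iff.2 fun n ↦ (h n).nonneg_left] with x hx hnonneg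
    exact ge_of_tendsto' hx hnonneg
  nonneg_right := by
    filter_upwards [hv, ae_all_iff.2 fun n ↦ (h n).nonneg_right] with y hy hnonneg
    exact ge_of_tendsto' hy hnonneg
  one_le_add := by
    have : CountableInterFilter (ae μ ×ˢ ae ν) := by rw [prod_eq_inf]; infer_instance
    filter_upwards [tendsto_fst.eventually hu, tendsto_snd.eventually hv,
      eventually_countable_forall.2 fun n ↦ (h n).one_le_add] with p hx hy hone hpW
    exact ge_of_tendsto' (hx.add hy) fun n ↦ hone n hpW

theorem continuous_integral_Lp_two [IsFiniteMeasure μ] :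
    Continuous fun f : Lp ℝ 2 μ ↦ ∫ x, f x ∂μ := by
  have hinner (f : Lp ℝ 2 μ) := L2.inner_indicatorConstLp_one (𝕜 := ℝ) MeasurableSet.univ
    (measure_ne_top μ univ) f
  simp only [Measure.restrict_univ] at hinner
  simp only [← hinner]
  fun_prop

theorem isClosed_fracCoverSet [IsFiniteMeasure μ] [IsFiniteMeasure ν] (W : Set (X × Y)) (c : ℝ) :
    IsClosed (fracCoverSet μ ν W c) := by
  refine IsSeqClosed.isClosed fun z w hz hzw ↦ ⟨?_, ?_⟩
  · have hfst : Tendsto (fun n ↦ (z n).fst) atTop (𝓝 w.fst) :=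
      (WithLp.continuous_fst ..).continuousAt.tendsto.comp hzw
    have hsnd : Tendsto (fun n ↦ (z n).snd) atTop (𝓝 w.snd) :=
      (WithLp.continuous_snd ..).continuousAt.tendsto.comp hzw
    obtain ⟨k, hk, hkfst⟩ := (tendstoInMeasure_of_tendsto_Lp hfst).exists_seq_tendsto_ae
    obtain ⟨l, hl, hlsnd⟩ := (tendstoInMeasure_of_tendsto_Lp
      (hsnd.comp hk.tendsto_atTop)).exists_seq_tendsto_ae
    refine .of_tendsto (fun n ↦ (hz (k (l n))).1) ?_ hlsnd
    filter_upwards [hkfst] with x hx using hx.comp hl.tendsto_atTop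
  · have hcont : Continuous fun z : WeightSpace μ ν ↦ ∫ x, z.fst x ∂μ + ∫ y, z.snd y ∂ν :=
      (continuous_integral_Lp_two.comp (WithLp.continuous_fst ..)).add
        (continuous_integral_Lp_two.comp (WithLp.continuous_snd ..))
    exact le_of_tendsto' ((hcont.tendsto w).comp hzw) fun n ↦ (hz n).2

/-- The least total measure `μ U + ν V` of a cover of `W` by the columns over `U` and the rows
over `V`, as an outer measure. Nonmeasurable `U` and `V` are allowed, since they can be replaced by
their measurable hulls. -/
def coverCost (μ : Measure X) (ν : Measure Y) : OuterMeasure (X × Y) where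
  measureOf W := ⨅ (U : Set X) (V : Set Y) (_ : W ⊆ Prod.fst ⁻¹' U ∪ Prod.snd ⁻¹' V), μ U + ν V
  empty := nonpos_iff_eq_zero.1 <| iInf₂_le_of_le ∅ ∅ <| iInf_le_of_le (empty_subset _) <| by
    rw [measure_empty, measure_empty, add_zero]
  mono h := le_iInf₂ fun U V ↦ le_iInf fun hUV ↦ iInf₂_le_of_le U V <| iInf_le _ (h.trans hUV)
  iUnion_nat W _ := by
    refine ENNReal.le_of_forall_pos_le_add fun ε hε hfin ↦ ?_
    obtain ⟨δ, hδ, hδε⟩ := ENNReal.exists_pos_sum_of_countable (ENNReal.coe_ne_zero.2 hε.ne') ℕ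
    have hcover (n : ℕ) := ENNReal.lt_add_right (ENNReal.ne_top_of_tsum_ne_top hfin.ne n)
      (ENNReal.coe_ne_zero.2 (hδ n).ne')
    simp only [iInf_lt_iff] at hcover
    choose U V hUV hlt using hcover
    have hsub : ⋃ n, W n ⊆ Prod.fst ⁻¹' (⋃ n, U n) ∪ Prod.snd ⁻¹' (⋃ n, V n) :=
      iUnion_subset fun n ↦ (hUV n).trans <| union_subset_union
        (preimage_mono (subset_iUnion U n)) (preimage_mono (subset_iUnion V n))
    refine iInf₂_le_of_le _ _ <| iInf_le_of_le hsub ?_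
    calc μ (⋃ n, U n) + ν (⋃ n, V n)
        ≤ ∑' n, (μ (U n) + ν (V n)) := by
          rw [ENNReal.tsum_add]
          gcongr <;> exact measure_iUnion_le _
      _ ≤ ∑' n, (_ + (δ n : ℝ≥0∞)) := ENNReal.tsum_le_tsum fun n ↦ (hlt n).le
      _ ≤ _ := by
          rw [ENNReal.tsum_add]
          gcongr

theorem coverCost_apply (W : Set (X × Y)) : coverCost μ ν W =
    ⨅ (U : Set X) (V : Set Y) (_ : W ⊆ Prod.fst ⁻¹' U ∪ Prod.snd ⁻¹' V), μ U + ν V :=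
  rfl

theorem coverCost_le {W : Set (X × Y)} {U : Set X} {V : Set Y}
    (h : W ⊆ Prod.fst ⁻¹' U ∪ Prod.snd ⁻¹' V) : coverCost μ ν W ≤ μ U + ν V :=
  iInf₂_le_of_le U V (iInf_le _ h)

theorem exists_measure_le_add_measure_lt_le_lintegral {u : X → ℝ} {v : Y → ℝ}
    (hu : AEMeasurable u μ) (hv : AEMeasurable v ν) (hu0 : 0 ≤ᵐ[μ] u) (hv0 : 0 ≤ᵐ[ν] v) :
    ∃ t : ℝ, μ {x | t ≤ u x} + ν {y | 1 - t < v y} ≤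
      ∫⁻ x, ENNReal.ofReal (u x) ∂μ + ∫⁻ y, ENNReal.ofReal (v y) ∂ν := by
  -- On average over a uniform level `t ∈ (0, 1)` the inequality is the layer cake formula.
  set lam : Measure ℝ := volume.restrict (Ioo 0 1)
  have : IsProbabilityMeasure lam := ⟨by simp [lam]⟩
  have hlam : lam ≤ volume.restrict (Ioi 0) := Measure.restrict_mono Ioo_subset_Ioi_self le_rfl
  have hreflect : MeasurePreserving (fun t : ℝ ↦ 1 - t) lam lam := by
    simpa [lam] using (Measure.measurePreserving_sub_left (volume : Measure ℝ) 1).restrict_preimage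
      (measurableSet_Ioo (a := (0 : ℝ)) (b := 1))
  have hμ : Measurable fun t : ℝ ↦ μ {x | t ≤ u x} :=
    Antitone.measurable fun s t hst ↦ measure_mono fun x hx ↦ hst.trans hx
  have hν : Measurable fun t : ℝ ↦ ν {y | t < v y} :=
    Antitone.measurable fun s t hst ↦ measure_mono fun x hx ↦ hst.trans_lt hx
  obtain ⟨t, ht⟩ := exists_le_lintegral (μ := lam)
    (hμ.add (hν.comp hreflect.measurable)).aemeasurable
  refine ⟨t, ht.trans ?_⟩
  simp only [Pi.add_apply, Function.comp_apply]
  rw [lintegral_add_left hμ, hreflect.lintegral_comp hν,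
    lintegral_eq_lintegral_meas_le μ hu0 hu, lintegral_eq_lintegral_meas_lt ν hv0 hv]
  gcongr

theorem coverCost_le_lintegral_add_lintegral {W : Set (X × Y)} {u : X → ℝ} {v : Y → ℝ}
    (hu : AEMeasurable u μ) (hv : AEMeasurable v ν) (h : IsFracCover μ ν W u v) :
    coverCost μ ν W ≤ ∫⁻ x, ENNReal.ofReal (u x) ∂μ + ∫⁻ y, ENNReal.ofReal (v y) ∂ν := by
  obtain ⟨A, hA, B, hB, hAB⟩ := mem_prod_iff.1 h.one_le_add
  obtain ⟨t, ht⟩ := exists_measure_le_add_measure_lt_le_lintegral hu hv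
    h.nonneg_left h.nonneg_right
  have hcover : W ⊆ Prod.fst ⁻¹' ({x | t ≤ u x} ∪ Aᶜ) ∪ Prod.snd ⁻¹' ({y | 1 - t < v y} ∪ Bᶜ) := by
    intro p hp
    by_cases hpAB : p ∈ A ×ˢ B
    · rcases le_or_gt t (u p.1) with htu | htu
      · exact .inl (.inl htu)
      · have := hAB hpAB hp
        exact .inr (.inl (by simp only [mem_ofPred_eq]; linarith))
    · rcases not_and_or.1 hpAB with hpA | hpB
      exacts [.inl (.inr hpA), .inr (.inr hpB)]
  calc coverCost μ ν W
      ≤ μ ({x | t ≤ u x} ∪ Aᶜ) + ν ({y | 1 - t < v y} ∪ Bᶜ) := coverCost_le hcover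
    _ ≤ (μ {x | t ≤ u x} + μ Aᶜ) + (ν {y | 1 - t < v y} + ν Bᶜ) := by
        gcongr <;> exact measure_union_le _ _
    _ = μ {x | t ≤ u x} + ν {y | 1 - t < v y} := by
        rw [mem_ae_iff.1 hA, mem_ae_iff.1 hB, add_zero, add_zero]
    _ ≤ _ := ht

theorem coverCost_le_ofReal [IsFiniteMeasure μ] [IsFiniteMeasure ν] {W : Set (X × Y)} {c : ℝ}
    {z : WeightSpace μ ν} (hz : z ∈ fracCoverSet μ ν W c) :
    coverCost μ ν W ≤ ENNReal.ofReal c := by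
  have hfst := (Lp.memLp z.fst).integrable one_le_two
  have hsnd := (Lp.memLp z.snd).integrable one_le_two
  refine (coverCost_le_lintegral_add_lintegral hfst.aemeasurable hsnd.aemeasurable hz.1).trans ?_
  rw [← ofReal_integral_eq_lintegral_ofReal hfst hz.1.nonneg_left,
    ← ofReal_integral_eq_lintegral_ofReal hsnd hz.1.nonneg_right,
    ← ENNReal.ofReal_add (integral_nonneg_of_ae hz.1.nonneg_left)
      (integral_nonneg_of_ae hz.1.nonneg_right)]
  exact ENNReal.ofReal_le_ofReal hz.2

theorem IsFracCover.congr_ae {W : Set (X × Y)} {u u' : X → ℝ} {v v' : Y → ℝ}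
    (h : IsFracCover μ ν W u v) (hu : u =ᵐ[μ] u') (hv : v =ᵐ[ν] v') : IsFracCover μ ν W u' v' :=
  .of_tendsto (fun _ ↦ h) (hu.mono fun _ hx ↦ hx ▸ tendsto_const_nhds)
    (hv.mono fun _ hy ↦ hy ▸ tendsto_const_nhds)

theorem isFracCover_indicator {W : Set (X × Y)} {U : Set X} {V : Set Y}
    (h : W ⊆ Prod.fst ⁻¹' U ∪ Prod.snd ⁻¹' V) :
    IsFracCover μ ν W (U.indicator 1) (V.indicator 1) where
  nonneg_left := .of_forall <| indicator_nonneg fun _ _ ↦ zero_le_one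
  nonneg_right := .of_forall <| indicator_nonneg fun _ _ ↦ zero_le_one
  one_le_add := by
    refine .of_forall fun p hp ↦ ?_
    have hu := indicator_nonneg (s := U) (f := (1 : X → ℝ)) (fun _ _ ↦ zero_le_one) p.1
    have hv := indicator_nonneg (s := V) (f := (1 : Y → ℝ)) (fun _ _ ↦ zero_le_one) p.2
    rcases h hp with hpU | hpV
    · rw [indicator_of_mem (mem_preimage.1 hpU), Pi.one_apply]
      linarith
    · rw [indicator_of_mem (mem_preimage.1 hpV), Pi.one_apply]
      linarith

theorem norm_sq_indicatorConstLp_one {s : Set X} (hs : MeasurableSet s) (hμs : μ s ≠ ∞) :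
    ‖indicatorConstLp 2 hs hμs (1 : ℝ)‖ ^ 2 = μ.real s := by
  rw [norm_indicatorConstLp two_ne_zero ENNReal.ofNat_ne_top, norm_one, one_mul,
    ENNReal.toReal_ofNat, ← Real.sqrt_eq_rpow, Real.sq_sqrt measureReal_nonneg]

theorem exists_mem_fracCoverSet_norm_sq_le [IsFiniteMeasure μ] [IsFiniteMeasure ν]
    {W : Set (X × Y)} {c : ℝ≥0} (h : coverCost μ ν W < c) :
    ∃ z ∈ fracCoverSet μ ν W c, ‖z‖ ^ 2 ≤ c := by
  simp only [coverCost_apply, iInf_lt_iff] at h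
  obtain ⟨U, V, hUV, hc⟩ := h
  have hU := measurableSet_toMeasurable μ U
  have hV := measurableSet_toMeasurable ν V
  have hcover : W ⊆ Prod.fst ⁻¹' toMeasurable μ U ∪ Prod.snd ⁻¹' toMeasurable ν V :=
    hUV.trans <| union_subset_union (preimage_mono (subset_toMeasurable μ U))
      (preimage_mono (subset_toMeasurable ν V))
  have hmass : μ.real (toMeasurable μ U) + ν.real (toMeasurable ν V) ≤ c := by
    rw [measureReal_def, measureReal_def, measure_toMeasurable, measure_toMeasurable,
      ← ENNReal.toReal_add (measure_ne_top μ U) (measure_ne_top ν V)]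
    exact ENNReal.toReal_mono ENNReal.coe_ne_top hc.le
  set u := indicatorConstLp 2 hU (measure_ne_top μ _) (1 : ℝ)
  set v := indicatorConstLp 2 hV (measure_ne_top ν _) (1 : ℝ)
  have hu : ⇑u =ᵐ[μ] (toMeasurable μ U).indicator 1 := indicatorConstLp_coeFn
  have hv : ⇑v =ᵐ[ν] (toMeasurable ν V).indicator 1 := indicatorConstLp_coeFn
  refine ⟨WithLp.toLp 2 (u, v), ⟨(isFracCover_indicator hcover).congr_ae hu.symm hv.symm, ?_⟩, ?_⟩
  · rwa [WithLp.toLp_fst, WithLp.toLp_snd, integral_congr_ae hu, integral_congr_ae hv,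
      integral_indicator_one hU, integral_indicator_one hV]
  · rwa [WithLp.prod_norm_sq_eq_of_L2, WithLp.toLp_fst, WithLp.toLp_snd,
      norm_sq_indicatorConstLp_one, norm_sq_indicatorConstLp_one]

theorem fracCoverSet_anti {W W' : Set (X × Y)} (h : W ⊆ W') (c : ℝ) :
    fracCoverSet μ ν W' c ⊆ fracCoverSet μ ν W c := fun _ hz ↦
  ⟨⟨hz.1.nonneg_left, hz.1.nonneg_right, hz.1.one_le_add.mono fun _ hp hpW ↦ hp (h hpW)⟩, hz.2⟩

theorem iInter_fracCoverSet_subset (W : ℕ → Set (X × Y)) (c : ℝ) :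
    ⋂ n, fracCoverSet μ ν (W n) c ⊆ fracCoverSet μ ν (⋃ n, W n) c := by
  have : CountableInterFilter (ae μ ×ˢ ae ν) := by rw [prod_eq_inf]; infer_instance
  intro z hz
  have hz := mem_iInter.1 hz
  refine ⟨⟨(hz 0).1.nonneg_left, (hz 0).1.nonneg_right, ?_⟩, (hz 0).2⟩
  filter_upwards [eventually_countable_forall.2 fun n ↦ (hz n).1.one_le_add] with p hp hpW
  obtain ⟨n, hn⟩ := mem_iUnion.1 hpW
  exact hp n hn

theorem coverCost_iUnion_le_of_monotone [IsFiniteMeasure μ] [IsFiniteMeasure ν]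
    {W : ℕ → Set (X × Y)} (hW : Monotone W) :
    coverCost μ ν (⋃ n, W n) ≤ ⨆ n, coverCost μ ν (W n) := by
  by_contra! h
  obtain ⟨c, hc, hlt⟩ := ENNReal.lt_iff_exists_nnreal_btwn.1 h
  have hbdd (n : ℕ) : ∃ z ∈ fracCoverSet μ ν (W n) c, ‖z‖ ≤ √c := by
    obtain ⟨z, hz, hnorm⟩ := exists_mem_fracCoverSet_norm_sq_le ((le_iSup _ n).trans_lt hc)
    exact ⟨z, hz, Real.le_sqrt_of_sq_le hnorm⟩
  obtain ⟨z, hz⟩ := nonempty_iInter_of_antitone_isClosed_convex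
    (fun m n hmn ↦ fracCoverSet_anti (hW hmn) c) (fun n ↦ isClosed_fracCoverSet (W n) c)
    (fun n ↦ convex_fracCoverSet (W n) c) hbdd
  refine hlt.not_ge ?_
  simpa only [ENNReal.ofReal_coe_nnreal] using
    coverCost_le_ofReal (iInter_fracCoverSet_subset W c hz)

end FractionalCovers

theorem exists_linearMap_le_sublinear_eq {E : Type*} [AddCommGroup E] [Module ℝ E] {N : E → ℝ}
    (N_hom : ∀ c : ℝ, 0 < c → ∀ x, N (c • x) = c * N x)
    (N_add : ∀ x y, N (x + y) ≤ N x + N y) (x₀ : E) :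
    ∃ ℓ : E →ₗ[ℝ] ℝ, (∀ x, ℓ x ≤ N x) ∧ ℓ x₀ = N x₀ := by
  have hzero : N 0 = 0 := by
    have := N_hom 2 two_pos 0
    rw [smul_zero] at this
    linarith
  have hsmul (c : ℝ) : c * N x₀ ≤ N (c • x₀) := by
    rcases lt_trichotomy c 0 with hc | rfl | hc
    · have hadd := N_add (c • x₀) (-c • x₀)
      rw [neg_smul, add_neg_cancel, hzero, ← neg_smul, N_hom (-c) (neg_pos.2 hc)] at hadd
      linarith
    · rw [zero_mul, zero_smul, hzero]
    · exact (N_hom c hc x₀).ge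
  have hker (c : ℝ) (hc : c • x₀ = 0) : c • N x₀ = 0 := by
    rcases smul_eq_zero.1 hc with rfl | rfl
    · exact zero_smul ℝ _
    · rw [hzero, smul_zero]
  obtain ⟨ℓ, hℓ, hle⟩ := exists_extension_of_le_sublinear
    (LinearPMap.mkSpanSingleton' x₀ (N x₀) hker) N N_hom N_add fun ⟨x, hx⟩ ↦ by
      obtain ⟨c, rfl⟩ := Submodule.mem_span_singleton.1 hx
      simpa only [LinearPMap.mkSpanSingleton'_apply, RingHom.id_apply, smul_eq_mul] using hsmul c
  exact ⟨ℓ, hle, (hℓ ⟨x₀, Submodule.mem_span_singleton_self x₀⟩).trans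
    (LinearPMap.mkSpanSingleton'_apply_self ..)⟩

section Riesz

theorem exists_compactlySupported_eqOn_one_tsupport_subset {Z : Type*} [TopologicalSpace Z]
    [T2Space Z] [LocallyCompactSpace Z] {K O : Set Z} (hK : IsCompact K) (hO : IsOpen O)
    (hKO : K ⊆ O) :
    ∃ g : C_c(Z, ℝ), EqOn g 1 K ∧ tsupport g ⊆ O ∧ ∀ z, g z ∈ Icc (0 : ℝ) 1 := by
  obtain ⟨g, hgK, hgcomp, hgO, hg⟩ := exists_continuousMap_one_of_isCompact_subset_isOpen hK hO hKO
  exact ⟨⟨g, hgcomp⟩, hgK, hgO, hg⟩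

variable {Z : Type*} [TopologicalSpace Z] [T2Space Z] [LocallyCompactSpace Z] [MeasurableSpace Z]
  [BorelSpace Z] {Λ : C_c(Z, ℝ) →ₚ[ℝ] ℝ}

theorem map_rieszMeasure_le {X : Type*} [TopologicalSpace X] [MeasurableSpace X] [BorelSpace X]
    {μ : Measure X} [μ.OuterRegular] {φ : Z → X} (hφ : Continuous φ)
    (h : ∀ (O : Set X) (g : C_c(Z, ℝ)), IsOpen O → tsupport g ⊆ φ ⁻¹' O →
      (∀ z, g z ∈ Icc (0 : ℝ) 1) → ENNReal.ofReal (Λ g) ≤ μ O) :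
    (RealRMK.rieszMeasure Λ).map φ ≤ μ := by
  refine Measure.le_iff.2 fun s hs ↦ ?_
  rw [s.measure_eq_iInf_isOpen μ]
  refine le_iInf₂ fun O hsO ↦ le_iInf fun hO ↦ ?_
  calc (RealRMK.rieszMeasure Λ).map φ s
      ≤ RealRMK.rieszMeasure Λ (φ ⁻¹' O) := by
        rw [Measure.map_apply hφ.measurable hs]
        gcongr
    _ ≤ μ O := by
        rw [(hO.preimage hφ).measure_eq_iSup_isCompact]
        refine iSup₂_le fun K hKO ↦ iSup_le fun hK ↦ ?_
        obtain ⟨g, hgK, hgO, hg⟩ :=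
          exists_compactlySupported_eqOn_one_tsupport_subset hK (hO.preimage hφ) hKO
        exact (RealRMK.rieszMeasure_le_of_eq_one Λ (fun z ↦ (hg z).1) hK hgK).trans
          (h O g hO hgO hg)

theorem le_rieszMeasure_of_isCompact {K : Set Z} (hK : IsCompact K) {c : ℝ≥0∞}
    (h : ∀ g : C_c(Z, ℝ), (∀ z, g z ∈ Icc (0 : ℝ) 1) → EqOn g 1 K → c ≤ ENNReal.ofReal (Λ g)) :
    c ≤ RealRMK.rieszMeasure Λ K := by
  rw [K.measure_eq_iInf_isOpen]
  refine le_iInf₂ fun O hKO ↦ le_iInf fun hO ↦ ?_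
  obtain ⟨g, hgK, hgO, hg⟩ := exists_compactlySupported_eqOn_one_tsupport_subset hK hO hKO
  exact (h g hg hgK).trans (RealRMK.le_rieszMeasure_tsupport_subset Λ hg hgO)

end Riesz

section DualCost

variable {X Y : Type*} [MeasurableSpace X] [MeasurableSpace Y] {μ : Measure X} {ν : Measure Y}

/-- The value of the Kantorovich dual problem for `f`: the least total mass of nonnegative weights
`u`, `v` with `f (x, y) ≤ u x + v y` everywhere. It is the sublinear functional that dominates the
integrals of `f` against the measures in `subcouplings μ ν`. -/
def dualCost (μ : Measure X) (ν : Measure Y) (f : X × Y → ℝ) : ℝ≥0∞ :=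
  ⨅ (u : X → ℝ≥0) (v : Y → ℝ≥0) (_ : Measurable u) (_ : Measurable v)
    (_ : ∀ p, f p ≤ u p.1 + v p.2), ∫⁻ x, u x ∂μ + ∫⁻ y, v y ∂ν

theorem dualCost_le {f : X × Y → ℝ} {u : X → ℝ≥0} {v : Y → ℝ≥0} (hu : Measurable u)
    (hv : Measurable v) (h : ∀ p, f p ≤ u p.1 + v p.2) :
    dualCost μ ν f ≤ ∫⁻ x, u x ∂μ + ∫⁻ y, v y ∂ν :=
  iInf₂_le_of_le u v <| iInf₂_le_of_le hu hv <| iInf_le _ h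

theorem dualCost_add_le (f g : X × Y → ℝ) :
    dualCost μ ν (f + g) ≤ dualCost μ ν f + dualCost μ ν g := by
  conv_rhs => simp only [dualCost, ENNReal.iInf_add, ENNReal.add_iInf]
  refine le_iInf₂ fun u' v' ↦ le_iInf₂ fun hu' hv' ↦ le_iInf fun hg ↦
    le_iInf₂ fun u v ↦ le_iInf₂ fun hu hv ↦ le_iInf fun hf ↦ ?_
  calc dualCost μ ν (f + g)
      ≤ ∫⁻ x, (u + u') x ∂μ + ∫⁻ y, (v + v') y ∂ν :=
        dualCost_le (hu.add hu') (hv.add hv') fun p ↦ by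
          simp only [Pi.add_apply, NNReal.coe_add]
          linarith [hf p, hg p]
    _ = _ := by
        simp only [Pi.add_apply, ENNReal.coe_add]
        rw [lintegral_add_left (by fun_prop), lintegral_add_left (by fun_prop), add_add_add_comm]

theorem dualCost_smul_le {c : ℝ≥0} (hc : c ≠ 0) (f : X × Y → ℝ) :
    dualCost μ ν (c • f) ≤ c * dualCost μ ν f := by
  have hc' : (c : ℝ≥0∞) ≠ 0 := ENNReal.coe_ne_zero.2 hc
  conv_rhs => simp only [dualCost, ENNReal.mul_iInf_of_ne hc' ENNReal.coe_ne_top]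
  refine le_iInf₂ fun u v ↦ le_iInf₂ fun hu hv ↦ le_iInf fun hf ↦ ?_
  calc dualCost μ ν (c • f)
      ≤ ∫⁻ x, (c • u) x ∂μ + ∫⁻ y, (c • v) y ∂ν :=
        dualCost_le (hu.const_smul c) (hv.const_smul c) fun p ↦ by
          simp only [Pi.smul_apply, NNReal.smul_def, smul_eq_mul, NNReal.coe_mul, ← mul_add]
          gcongr
          exact hf p
    _ = c * (∫⁻ x, u x ∂μ + ∫⁻ y, v y ∂ν) := by
        simp only [Pi.smul_apply, smul_eq_mul, ENNReal.coe_mul]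
        rw [lintegral_const_mul _ (by fun_prop), lintegral_const_mul _ (by fun_prop), mul_add]

theorem dualCost_smul {c : ℝ≥0} (hc : c ≠ 0) (f : X × Y → ℝ) :
    dualCost μ ν (c • f) = c * dualCost μ ν f := by
  refine (dualCost_smul_le hc f).antisymm ?_
  calc c * dualCost μ ν f
      = c * dualCost μ ν (c⁻¹ • c • f) := by rw [inv_smul_smul₀ hc]
    _ ≤ c * (c⁻¹ * dualCost μ ν (c • f)) := by
        gcongr
        exact_mod_cast dualCost_smul_le (inv_ne_zero hc) (c • f)
    _ = dualCost μ ν (c • f) := by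
        rw [← mul_assoc, ← ENNReal.coe_mul, mul_inv_cancel₀ hc, ENNReal.coe_one, one_mul]

theorem dualCost_le_measure_add_measure {f : X × Y → ℝ} {U : Set X} {V : Set Y}
    (hU : MeasurableSet U) (hV : MeasurableSet V) (hf : ∀ p, f p ≤ 1)
    (hcover : ∀ p, 0 < f p → p.1 ∈ U ∨ p.2 ∈ V) : dualCost μ ν f ≤ μ U + ν V := by
  refine (dualCost_le (u := U.indicator 1) (v := V.indicator 1) (measurable_one.indicator hU)
    (measurable_one.indicator hV) fun p ↦ ?_).trans_eq ?_
  · rcases le_or_gt (f p) 0 with hp | hp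
    · exact hp.trans (by positivity)
    · refine (hf p).trans ?_
      rcases hcover p hp with hpU | hpV
      · exact le_add_of_le_of_nonneg (by simp [indicator_of_mem hpU]) (NNReal.coe_nonneg _)
      · exact le_add_of_nonneg_of_le (NNReal.coe_nonneg _) (by simp [indicator_of_mem hpV])
  · simp only [ENNReal.coe_indicator, Pi.one_apply, ENNReal.coe_one,
      lintegral_indicator_const hU, lintegral_indicator_const hV, one_mul]

theorem dualCost_eq_zero_of_nonpos {f : X × Y → ℝ} (hf : f ≤ 0) : dualCost μ ν f = 0 := by
  have hle := dualCost_le_measure_add_measure (μ := μ) (ν := ν) (f := f) .empty .empty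
    (fun p ↦ (hf p).trans zero_le_one) fun p hp ↦ absurd (hf p) hp.not_ge
  rwa [measure_empty, measure_empty, add_zero, nonpos_iff_eq_zero] at hle

theorem coverCost_le_dualCost_indicator (W : Set (X × Y)) :
    coverCost μ ν W ≤ dualCost μ ν (W.indicator 1) := by
  refine le_iInf₂ fun u v ↦ le_iInf₂ fun hu hv ↦ le_iInf fun h ↦ ?_
  have hfrac : IsFracCover μ ν W (fun x ↦ u x) (fun y ↦ v y) :=
    ⟨.of_forall fun x ↦ (u x).2, .of_forall fun y ↦ (v y).2, .of_forall fun p hp ↦ by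
      simpa only [indicator_of_mem hp, Pi.one_apply] using h p⟩
  simpa only [ENNReal.ofReal_coe_nnreal] using
    coverCost_le_lintegral_add_lintegral (by fun_prop) (by fun_prop) hfrac

theorem dualCost_ne_top [IsFiniteMeasure μ] {f : X × Y → ℝ} {c : ℝ≥0} (hf : ∀ p, f p ≤ c) :
    dualCost μ ν f ≠ ∞ := by
  refine ne_top_of_le_ne_top ?_ (dualCost_le (u := fun _ ↦ c) (v := 0) measurable_const
    measurable_zero fun p ↦ ?_)
  · simp [ENNReal.mul_ne_top]
  · simpa using hf p

theorem exists_linearMap_le_dualCost [IsFiniteMeasure μ] (f₀ : lp (fun _ : X × Y ↦ ℝ) ∞) :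
    ∃ ℓ : lp (fun _ : X × Y ↦ ℝ) ∞ →ₗ[ℝ] ℝ, (∀ f, ENNReal.ofReal (ℓ f) ≤ dualCost μ ν f) ∧
      ENNReal.ofReal (ℓ f₀) = dualCost μ ν f₀ := by
  have hfin (f : lp (fun _ : X × Y ↦ ℝ) ∞) : dualCost μ ν f ≠ ∞ :=
    dualCost_ne_top (c := ‖f‖₊) fun p ↦
      (Real.le_norm_self _).trans (lp.norm_apply_le_norm ENNReal.top_ne_zero f p)
  have hsmul (c : ℝ) (hc : 0 < c) (f : lp (fun _ : X × Y ↦ ℝ) ∞) :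
      (dualCost μ ν ⇑(c • f)).toReal = c * (dualCost μ ν f).toReal := by
    lift c to ℝ≥0 using hc.le
    rw [lp.coeFn_smul, ← NNReal.smul_def, dualCost_smul (NNReal.coe_pos.1 hc).ne',
      ENNReal.toReal_mul, ENNReal.coe_toReal]
  have hadd (f g : lp (fun _ : X × Y ↦ ℝ) ∞) : (dualCost μ ν ⇑(f + g)).toReal ≤
      (dualCost μ ν f).toReal + (dualCost μ ν g).toReal := by
    rw [lp.coeFn_add, ← ENNReal.toReal_add (hfin f) (hfin g)]
    exact ENNReal.toReal_mono (ENNReal.add_ne_top.2 ⟨hfin f, hfin g⟩) (dualCost_add_le _ _)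
  obtain ⟨ℓ, hle, heq⟩ := exists_linearMap_le_sublinear_eq
    (N := fun f : lp (fun _ : X × Y ↦ ℝ) ∞ ↦ (dualCost μ ν f).toReal) hsmul hadd f₀
  refine ⟨ℓ, fun f ↦ ENNReal.ofReal_le_of_le_toReal (hle f), ?_⟩
  rw [heq, ENNReal.ofReal_toReal (hfin f₀)]

/-- The inclusion of the compactly supported continuous functions into the bounded functions, along
which linear functionals are restricted. -/
def compactlySupportedToLp (Z : Type*) [TopologicalSpace Z] :
    C_c(Z, ℝ) →ₗ[ℝ] lp (fun _ : Z ↦ ℝ) ∞ where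
  toFun g := ⟨⇑g, memℓp_infty <| by
    obtain ⟨C, hC⟩ := g.continuous.bounded_above_of_compact_support g.hasCompactSupport
    exact ⟨C, forall_mem_range.2 hC⟩⟩
  map_add' _ _ := rfl
  map_smul' _ _ := rfl

theorem exists_positiveLinearMap_le_dualCost [TopologicalSpace X] [TopologicalSpace Y]
    [IsFiniteMeasure μ] (W : Set (X × Y)) :
    ∃ Λ : C_c(X × Y, ℝ) →ₚ[ℝ] ℝ, (∀ g : C_c(X × Y, ℝ), ENNReal.ofReal (Λ g) ≤ dualCost μ ν g) ∧
      ∀ g : C_c(X × Y, ℝ), W.indicator 1 ≤ ⇑g →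
        dualCost μ ν (W.indicator 1) ≤ ENNReal.ofReal (Λ g) := by
  have hmem : Memℓp (E := fun _ : X × Y ↦ ℝ) (W.indicator 1) ∞ :=
    memℓp_infty ⟨1, forall_mem_range.2 fun p ↦
      (norm_indicator_le_norm_self 1 p).trans norm_one.le⟩
  obtain ⟨ℓ, hle, heq⟩ := exists_linearMap_le_dualCost (μ := μ) (ν := ν) ⟨_, hmem⟩
  have hmono {f g : lp (fun _ : X × Y ↦ ℝ) ∞} (hfg : ⇑f ≤ ⇑g) : ℓ f ≤ ℓ g := by
    have hnonpos := hle (f - g)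
    rwa [dualCost_eq_zero_of_nonpos (by rwa [lp.coeFn_sub, sub_nonpos]), nonpos_iff_eq_zero,
      ENNReal.ofReal_eq_zero, map_sub, sub_nonpos] at hnonpos
  refine ⟨.mk₀ (ℓ ∘ₗ compactlySupportedToLp (X × Y)) fun g hg ↦ ?_,
    fun g ↦ hle (compactlySupportedToLp (X × Y) g), fun g hg ↦ ?_⟩
  · rw [← map_zero ℓ]
    exact hmono (g := compactlySupportedToLp (X × Y) g) hg
  · exact heq.ge.trans <| ENNReal.ofReal_le_ofReal <|
      hmono (g := compactlySupportedToLp (X × Y) g) hg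

end DualCost

section Subcouplings

variable {X Y : Type*} [MeasurableSpace X] [MeasurableSpace Y] {μ : Measure X} {ν : Measure Y}

/-- The measures on the product whose marginals are bounded by `μ` and `ν`; for Lebesgue measure
on `(0, 1)` this is `Mset`. -/
def subcouplings (μ : Measure X) (ν : Measure Y) : Set (Measure (X × Y)) :=
  {m | m.map Prod.fst ≤ μ ∧ m.map Prod.snd ≤ ν}

theorem measure_le_coverCost {m : Measure (X × Y)} (hm : m ∈ subcouplings μ ν) (W : Set (X × Y)) :
    m W ≤ coverCost μ ν W := by
  refine le_iInf₂ fun U V ↦ le_iInf fun hUV ↦ ?_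
  calc m W ≤ m (Prod.fst ⁻¹' U) + m (Prod.snd ⁻¹' V) :=
        (measure_mono hUV).trans (measure_union_le _ _)
    _ ≤ m.map Prod.fst U + m.map Prod.snd V := by
        gcongr
        exacts [Measure.le_map_apply measurable_fst.aemeasurable U,
          Measure.le_map_apply measurable_snd.aemeasurable V]
    _ ≤ μ U + ν V := add_le_add (hm.1 U) (hm.2 V)

variable [TopologicalSpace X] [T2Space X] [LocallyCompactSpace X] [SecondCountableTopology X]
  [BorelSpace X] [TopologicalSpace Y] [T2Space Y] [LocallyCompactSpace Y]
  [SecondCountableTopology Y] [BorelSpace Y]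

theorem exists_mem_subcouplings_dualCost_le [IsFiniteMeasure μ] [IsFiniteMeasure ν]
    {K : Set (X × Y)} (hK : IsCompact K) :
    ∃ m ∈ subcouplings μ ν, dualCost μ ν (K.indicator 1) ≤ m K := by
  obtain ⟨Λ, hΛ, hΛK⟩ := exists_positiveLinearMap_le_dualCost (μ := μ) (ν := ν) K
  refine ⟨RealRMK.rieszMeasure Λ, ⟨map_rieszMeasure_le continuous_fst fun O g hO hgO hg ↦ ?_,
    map_rieszMeasure_le continuous_snd fun O g hO hgO hg ↦ ?_⟩,
    le_rieszMeasure_of_isCompact hK fun g hg hgK ↦ hΛK g fun p ↦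
      indicator_le' (fun p hp ↦ (hgK hp).ge) (fun p _ ↦ (hg p).1) p⟩
  · simpa using (hΛ g).trans <| dualCost_le_measure_add_measure hO.measurableSet .empty
      (fun p ↦ (hg p).2) fun p hp ↦ .inl <| hgO <| subset_tsupport g hp.ne'
  · simpa using (hΛ g).trans <| dualCost_le_measure_add_measure .empty hO.measurableSet
      (fun p ↦ (hg p).2) fun p hp ↦ .inr <| hgO <| subset_tsupport g hp.ne'

end Subcouplings

section InnerRegular

variable {X Y : Type*} [MeasurableSpace X] [MeasurableSpace Y] {μ : Measure X} {ν : Measure Y}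

variable [TopologicalSpace X] [TopologicalSpace Y]

/-- Inner regularity of `W` for the outer measure `coverCost μ ν`: up to arbitrarily small cost,
`W` is compact. -/
def IsCoverInnerRegular (μ : Measure X) (ν : Measure Y) (W : Set (X × Y)) : Prop :=
  ∀ ε : ℝ≥0∞, ε ≠ 0 → ∃ K ⊆ W, IsCompact K ∧ coverCost μ ν (W \ K) ≤ ε

theorem isCoverInnerRegular_prod [OpensMeasurableSpace X] [T2Space X] [OpensMeasurableSpace Y]
    [T2Space Y] [IsFiniteMeasure μ] [IsFiniteMeasure ν] [μ.InnerRegularCompactLTTop]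
    [ν.InnerRegularCompactLTTop] {U : Set X} {V : Set Y} (hU : MeasurableSet U)
    (hV : MeasurableSet V) : IsCoverInnerRegular μ ν (U ×ˢ V) := by
  intro ε hε
  have hε2 : ε / 2 ≠ 0 := ENNReal.div_ne_zero.2 ⟨hε, ENNReal.ofNat_ne_top⟩
  obtain ⟨K, hKU, hK, hUK⟩ := hU.exists_isCompact_sdiff_lt (measure_ne_top μ U) hε2
  obtain ⟨L, hLV, hL, hVL⟩ := hV.exists_isCompact_sdiff_lt (measure_ne_top ν V) hε2
  refine ⟨K ×ˢ L, prod_mono hKU hLV, hK.prod hL, ?_⟩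
  calc coverCost μ ν (U ×ˢ V \ K ×ˢ L)
      ≤ μ (U \ K) + ν (V \ L) := coverCost_le fun p hp ↦ by
        by_cases hpK : p.1 ∈ K
        · exact .inr ⟨hp.1.2, fun hpL ↦ hp.2 ⟨hpK, hpL⟩⟩
        · exact .inl ⟨hp.1.1, hpK⟩
    _ ≤ ε / 2 + ε / 2 := add_le_add hUK.le hVL.le
    _ = ε := ENNReal.add_halves ε

theorem IsCoverInnerRegular.iUnion {ι : Type*} [Finite ι] {W : ι → Set (X × Y)}
    (hW : ∀ i, IsCoverInnerRegular μ ν (W i)) : IsCoverInnerRegular μ ν (⋃ i, W i) := by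
  intro ε hε
  obtain ⟨δ, hδ, hδε⟩ := ENNReal.exists_pos_sum_of_countable' hε ι
  choose K hKW hK hWK using fun i ↦ hW i (δ i) (hδ i).ne'
  refine ⟨⋃ i, K i, iUnion_mono hKW, isCompact_iUnion hK, ?_⟩
  calc coverCost μ ν ((⋃ i, W i) \ ⋃ i, K i)
      ≤ coverCost μ ν (⋃ i, W i \ K i) := measure_mono <| by
        rw [iUnion_sdiff]
        exact iUnion_mono fun i ↦ sdiff_subset_sdiff_right (subset_iUnion K i)
    _ ≤ ∑' i, coverCost μ ν (W i \ K i) := measure_iUnion_le _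
    _ ≤ ∑' i, δ i := ENNReal.tsum_le_tsum hWK
    _ ≤ ε := hδε.le

theorem IsCoverInnerRegular.iInter [T2Space X] [T2Space Y] {ι : Type*} [Countable ι] [Nonempty ι]
    {W : ι → Set (X × Y)} (hW : ∀ i, IsCoverInnerRegular μ ν (W i)) :
    IsCoverInnerRegular μ ν (⋂ i, W i) := by
  intro ε hε
  obtain ⟨δ, hδ, hδε⟩ := ENNReal.exists_pos_sum_of_countable' hε ι
  choose K hKW hK hWK using fun i ↦ hW i (δ i) (hδ i).ne'
  have hcompact : IsCompact (⋂ i, K i) := (hK (Classical.arbitrary ι)).of_isClosed_subset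
    (isClosed_iInter fun i ↦ (hK i).isClosed) (iInter_subset K _)
  refine ⟨⋂ i, K i, iInter_mono hKW, hcompact, ?_⟩
  calc coverCost μ ν ((⋂ i, W i) \ ⋂ i, K i)
      ≤ coverCost μ ν (⋃ i, W i \ K i) := measure_mono <| by
        rw [sdiff_iInter]
        exact iUnion_mono fun i ↦ sdiff_subset_sdiff_left (iInter_subset W i)
    _ ≤ ∑' i, coverCost μ ν (W i \ K i) := measure_iUnion_le _
    _ ≤ ∑' i, δ i := ENNReal.tsum_le_tsum hWK
    _ ≤ ε := hδε.le

variable [T2Space X] [LocallyCompactSpace X] [SecondCountableTopology X] [BorelSpace X]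
  [T2Space Y] [LocallyCompactSpace Y] [SecondCountableTopology Y] [BorelSpace Y]
  [IsFiniteMeasure μ] [IsFiniteMeasure ν]

theorem IsCoverInnerRegular.coverCost_le_iSup {W : Set (X × Y)}
    (hW : IsCoverInnerRegular μ ν W) : coverCost μ ν W ≤ ⨆ m ∈ subcouplings μ ν, m W := by
  refine ENNReal.le_of_forall_pos_le_add fun ε hε _ ↦ ?_
  obtain ⟨K, hKW, hK, hWK⟩ := hW ε (ENNReal.coe_ne_zero.2 hε.ne')
  obtain ⟨m, hm, hmK⟩ := exists_mem_subcouplings_dualCost_le (μ := μ) (ν := ν) hK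
  calc coverCost μ ν W
      ≤ coverCost μ ν K + coverCost μ ν (W \ K) := by
        conv_lhs => rw [← union_sdiff_cancel hKW]
        exact measure_union_le _ _
    _ ≤ m W + ε := by
        gcongr
        exact (coverCost_le_dualCost_indicator K).trans (hmK.trans (measure_mono hKW))
    _ ≤ (⨆ m ∈ subcouplings μ ν, m W) + ε := by
        gcongr
        exact le_iSup₂ (f := fun m _ ↦ m W) m hm

theorem coverCost_iUnion_le_iSup {W : ℕ → Set (X × Y)} (hW : ∀ n, IsCoverInnerRegular μ ν (W n)) :
    coverCost μ ν (⋃ n, W n) ≤ ⨆ m ∈ subcouplings μ ν, m (⋃ n, W n) := by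
  have hacc (n : ℕ) : IsCoverInnerRegular μ ν (accumulate W n) := by
    rw [accumulate_def, show ⋃ k ≤ n, W k = ⋃ k : Iic n, W k from
      biUnion_eq_iUnion (Iic n) fun k _ ↦ W k]
    exact .iUnion fun k ↦ hW k
  rw [← iUnion_accumulate]
  refine (coverCost_iUnion_le_of_monotone monotone_accumulate).trans <| iSup_le fun n ↦
    (hacc n).coverCost_le_iSup.trans ?_
  gcongr
  exact subset_iUnion _ n

end InnerRegular

/-- Finite unions of measurable rectangles, that is, the members of the algebra of sets they
generate. -/
def IsFiniteUnionProd {X Y : Type*} [MeasurableSpace X] [MeasurableSpace Y] (S : Set (X × Y)) :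
    Prop :=
  ∃ (n : ℕ) (U : Fin n → Set X) (V : Fin n → Set Y), (∀ k, MeasurableSet (U k)) ∧
    (∀ k, MeasurableSet (V k)) ∧ S = ⋃ k, U k ×ˢ V k

theorem stmt17_general {X Y : Type*} [TopologicalSpace X] [T2Space X] [LocallyCompactSpace X]
    [SecondCountableTopology X] [MeasurableSpace X] [BorelSpace X] [TopologicalSpace Y] [T2Space Y]
    [LocallyCompactSpace Y] [SecondCountableTopology Y] [MeasurableSpace Y] [BorelSpace Y]
    (μ : Measure X) (ν : Measure Y) [IsFiniteMeasure μ] [IsFiniteMeasure ν]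
    {G : ℕ → ℕ → Set (X × Y)} (hG : ∀ i j, IsFiniteUnionProd (G i j)) :
    ⨆ m ∈ subcouplings μ ν, m (⋃ i, ⋂ j, G i j) = coverCost μ ν (⋃ i, ⋂ j, G i j) := by
  refine le_antisymm (iSup₂_le fun m hm ↦ measure_le_coverCost hm _) ?_
  refine coverCost_iUnion_le_iSup fun i ↦ .iInter fun j ↦ ?_
  obtain ⟨n, U, V, hU, hV, hUV⟩ := hG i j
  rw [hUV]
  exact .iUnion fun k ↦ isCoverInnerRegular_prod (hU k) (hV k)

theorem beta_eq_coverCost {W : Set (ℝ × ℝ)} (hW : W ⊆ Ioo 0 1 ×ˢ Ioo 0 1) :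
    beta W = coverCost (volume.restrict (Ioo 0 1)) (volume.restrict (Ioo 0 1)) W := by
  refine le_antisymm (le_iInf₂ fun U V ↦ le_iInf fun hUV ↦ ?_)
    (le_iInf₂ fun U V ↦ le_iInf₂ fun _ _ ↦ le_iInf₂ fun _ _ ↦ le_iInf fun hUV ↦ ?_)
  · set lam : Measure ℝ := volume.restrict (Ioo 0 1)
    have hmeas (s : Set ℝ) : MeasurableSet (toMeasurable lam s ∩ Ioo 0 1) :=
      (measurableSet_toMeasurable lam s).inter measurableSet_Ioo
    have hlam (s : Set ℝ) : volume (toMeasurable lam s ∩ Ioo 0 1) = lam s := by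
      rw [← Measure.restrict_apply (measurableSet_toMeasurable lam s), measure_toMeasurable]
    rw [← hlam U, ← hlam V]
    refine iInf₂_le_of_le _ _ <| iInf₂_le_of_le (hmeas U) (hmeas V) <|
      iInf₂_le_of_le inter_subset_right inter_subset_right <| iInf_le _ fun p hp ↦ ?_
    exact (hUV hp).imp (fun h ↦ ⟨⟨subset_toMeasurable lam U h, (hW hp).1⟩, (hW hp).2⟩)
      fun h ↦ ⟨(hW hp).1, subset_toMeasurable lam V h, (hW hp).2⟩
  · exact (coverCost_le fun p hp ↦ (hUV hp).imp And.left And.right).trans <|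
      add_le_add (Measure.restrict_apply_le _ _) (Measure.restrict_apply_le _ _)

theorem IsFinUnionRect.isFiniteUnionProd {S : Set (ℝ × ℝ)} (hS : IsFinUnionRect S) :
    IsFiniteUnionProd S := by
  obtain ⟨n, R, hR, rfl⟩ := hS
  choose U V hU hV _ _ hUV using hR
  exact ⟨n, U, V, hU, hV, iUnion_congr hUV⟩

theorem IsFinUnionRect.subset_Ioo_prod_Ioo {S : Set (ℝ × ℝ)} (hS : IsFinUnionRect S) :
    S ⊆ Ioo 0 1 ×ˢ Ioo 0 1 := by
  obtain ⟨n, R, hR, rfl⟩ := hS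
  refine iUnion_subset fun k ↦ ?_
  obtain ⟨U, V, -, -, hU, hV, hUV⟩ := hR k
  exact hUV ▸ prod_mono hU hV

theorem MemADeltaSigma.subset_Ioo_prod_Ioo {W : Set (ℝ × ℝ)} (hW : MemADeltaSigma W) :
    W ⊆ Ioo 0 1 ×ˢ Ioo 0 1 := by
  obtain ⟨G, hG, rfl⟩ := hW
  exact iUnion_subset fun i ↦ (iInter_subset (G i) 0).trans (hG i 0).subset_Ioo_prod_Ioo

theorem stmt17 (W : Set (ℝ × ℝ)) (hW : MemADeltaSigma W) :
    alpha W = beta W := by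
  rw [beta_eq_coverCost hW.subset_Ioo_prod_Ioo]
  obtain ⟨G, hG, rfl⟩ := hW
  exact stmt17_general _ _ fun i j ↦ (hG i j).isFiniteUnionProd
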